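/- Let r_1 ≥ r_2 ≥ r_3 be rationals in (0,1) satisfying the non-realizability condition: no coprime positive integers m > a ≥ 1 satisfy 1/r_1 > m/a, 1/r_2 > m/(m-a), and 1/r_3 > m simultaneously. Let k ≥ 1 and T ≥ 3 be integers. If 1/r_1 > (k(T-1)-(k-1))/((k-1)(T-1)-(k-2)) and 1/r_2 > k + 1/(T-2), then 1/r_3 ≤ k(T-2) + 1. -/

import Mathlib

/-- L-space condition (ii): if `1/r_1 > (k(T-1)-(k-1))/((k-1)(T-1)-(k-2))` and
`1/r_2 > k + 1/(T-2)`, then `1/r_3 ≤ k(T-2)+1`. -/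
theorem Lspace_condition_ii (r1 r2 r3 : ℚ) (h0 : 0 < r3) (h32 : r3 ≤ r2) (h21 : r2 ≤ r1)
    (h1 : r1 < 1)
    (hL : ∀ m a : ℤ, 1 ≤ a → a < m → IsCoprime m a →
      ¬((m : ℚ) / a < 1 / r1 ∧ (m : ℚ) / ((m : ℚ) - a) < 1 / r2 ∧ (m : ℚ) < 1 / r3))
    (k T : ℤ) (hk : 1 ≤ k) (hT : 3 ≤ T)
    (hr1 : ((k : ℚ) * ((T : ℚ) - 1) - ((k : ℚ) - 1))
        / (((k : ℚ) - 1) * ((T : ℚ) - 1) - ((k : ℚ) - 2)) < 1 / r1)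
    (hr2 : (k : ℚ) + 1 / ((T : ℚ) - 2) < 1 / r2) :
    1 / r3 ≤ (k : ℚ) * ((T : ℚ) - 2) + 1 := by
  by_contra! hr3
  have hS : (0 : ℚ) < (T : ℚ) - 2 := by
    have hT' : (3 : ℚ) ≤ T := by exact_mod_cast hT
    linarith
  refine hL (k * (T - 2) + 1) ((k - 1) * (T - 2) + 1) ?_ ?_ ⟨1 - k, k, by ring⟩ ⟨?_, ?_, ?_⟩
  · nlinarith
  · linarith
  · convert hr1 using 2 <;> push_cast <;> ring
  · convert hr2 using 1
    push_cast
    rw [show (k : ℚ) * (T - 2) + 1 - ((k - 1) * (T - 2) + 1) = T - 2 by ring]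
    field_simp
  · exact_mod_cast hr3
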